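/- Let γ : ℝ → ℝ^D be a smooth (C^∞) curve parametrized by arc length, i.e. ‖γ'(t)‖ = 1 for all t, and set x = γ(0). Let V ⊆ ℝ^D be a linear subspace with γ'(0) ∈ V and γ''(0) ∈ V^⊥, let n ∈ V^⊥ be a unit vector, let r > 0, and set c = x + r n. Then there exist constants C > 0 and ε > 0 such that for all s ∈ (0, ε), | r·arccos( ⟨x − c, γ(s) − c⟩ / (r ‖γ(s) − c‖) ) − s | ≤ C s³. -/

import Mathlib

open RealInnerProductSpace

theorem aux_arctan (y : ℝ) (hy : 0 ≤ y) : |Real.arctan y - y| ≤ y ^ 3 := by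
  have h0 : 0 ≤ Real.arctan y := Real.arctan_nonneg.2 hy
  have h1 : Real.arctan y ≤ y := by
    have := Real.le_tan h0 (Real.arctan_lt_pi_div_two y)
    rwa [Real.tan_arctan] at this
  have h2 : y / √(1 + y ^ 2) ≤ Real.arctan y := by
    rw [← Real.sin_arctan]; exact Real.sin_le h0
  have h3 : √(1 + y ^ 2) ≤ 1 + y ^ 2 := by
    rw [Real.sqrt_le_left (by positivity)]; nlinarith [sq_nonneg y, sq_nonneg (y^2)]
  have hs : 0 < √(1 + y ^ 2) := Real.sqrt_pos.2 (by positivity)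
  have h4 : y - y ^ 3 ≤ y / √(1 + y ^ 2) := by
    refine le_trans ?_ (div_le_div_of_nonneg_left hy hs h3)
    rw [le_div_iff₀ (by positivity)]
    have : 0 ≤ y ^ 5 := by positivity
    nlinarith
  have : 0 ≤ y ^ 3 := by positivity
  rw [abs_le]; constructor <;> linarith

theorem aux_angle {E : Type*} [NormedAddCommGroup E] [InnerProductSpace ℝ E] (n w : E)
    (hn : ‖n‖ = 1) (r a : ℝ) (hr : 0 < r) (ha : a = -⟪n, w⟫) (ha0 : 0 < a) :
    Real.arccos (⟪-(r • n), w⟫ / (r * ‖w‖)) = Real.arctan (‖w + a • n‖ / a) := by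
  have hw : ‖w + a • n‖ ^ 2 = ‖w‖ ^ 2 - a ^ 2 := by
    rw [norm_add_sq_real, inner_smul_right, norm_smul, hn, real_inner_comm, mul_one,
      Real.norm_eq_abs, sq_abs]
    have : ⟪n, w⟫ = -a := by linarith
    rw [this]; ring
  have hin : ⟪-(r • n), w⟫ = r * a := by
    rw [inner_neg_left, real_inner_smul_left, ha]; ring
  have hwpos : 0 < ‖w‖ := by
    rcases (norm_nonneg w).eq_or_lt with h | h
    · rw [← h] at hw; nlinarith [sq_nonneg ‖w + a • n‖]
    · exact h
  rw [Real.arctan_eq_arccos (by positivity), hin]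
  congr 1
  have : 1 + (‖w + a • n‖ / a) ^ 2 = (‖w‖ / a) ^ 2 := by
    rw [div_pow, div_pow, hw]; field_simp; ring
  rw [this, Real.sqrt_sq (by positivity)]
  field_simp

theorem aux_taylor {E : Type*} [NormedAddCommGroup E] [NormedSpace ℝ E] (γ : ℝ → E)
    (hγ : ContDiff ℝ (⊤ : ℕ∞) γ) : ∃ K : ℝ, 0 ≤ K ∧ ∀ s ∈ Set.Icc (0:ℝ) 1,
      ‖γ s - (γ 0 + s • deriv γ 0 + (s ^ 2 / 2) • deriv (deriv γ) 0)‖ ≤ K * s ^ 3 := by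
  have h3 : ContDiff ℝ ((2 : ℕ) + 1) γ := contDiff_infty.1 hγ 3
  obtain ⟨C, hC⟩ := exists_taylor_mean_remainder_bound (n := 2) (zero_le_one (α := ℝ))
    h3.contDiffOn
  have hu := uniqueDiffOn_Icc (zero_lt_one (α := ℝ))
  have hmem : (0:ℝ) ∈ Set.Icc (0:ℝ) 1 := by simp
  have e1 : iteratedDerivWithin 1 γ (Set.Icc 0 1) 0 = deriv γ 0 := by
    rw [iteratedDerivWithin_eq_iteratedDeriv hu (contDiff_infty.1 hγ 1).contDiffAt
      hmem, iteratedDeriv_one]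
  have e2 : iteratedDerivWithin 2 γ (Set.Icc 0 1) 0 = deriv (deriv γ) 0 := by
    rw [iteratedDerivWithin_eq_iteratedDeriv hu (contDiff_infty.1 hγ 2).contDiffAt
      hmem, iteratedDeriv_succ, iteratedDeriv_one]
  refine ⟨|C|, abs_nonneg _, fun s hs => ?_⟩
  have := hC s hs
  rw [taylorWithinEval_succ, taylorWithinEval_succ, taylor_within_zero_eval] at this
  simp only [zero_add, one_add_one_eq_two, e1, e2] at this
  norm_num at this
  have hs0 : 0 ≤ s ^ 3 := pow_nonneg hs.1 3
  refine le_trans (le_of_eq ?_) (this.trans (mul_le_mul_of_nonneg_right (le_abs_self C) hs0))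
  congr 4
  ring

theorem aux_real (r L M : ℝ) (hr : 0 < r) (hL : 0 ≤ L) (hM : 0 ≤ M) (a b s : ℝ)
    (hs : 0 < s) (hs1 : s ≤ 1) (ha : |a - r| ≤ L * s ^ 2) (ha2 : r / 2 ≤ a) (hb0 : 0 ≤ b)
    (hb : |b - s| ≤ M * s ^ 3) :
    |r * Real.arctan (b / a) - s| ≤
      (r * (2 * (1 + M) / r) ^ 3 + (r * M + L) / (r / 2)) * s ^ 3 := by
  have ha0 : 0 < a := by linarith
  have hy : 0 ≤ b / a := by positivity
  have h1 := aux_arctan _ hy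
  have hs3 : s ^ 3 ≤ s := by
    have := pow_le_pow_of_le_one hs.le hs1 (show 1 ≤ 3 by norm_num)
    simpa using this
  have h2 : b / a ≤ (2 * (1 + M) / r) * s := by
    have : b ≤ (1 + M) * s := by
      have := (abs_le.1 hb).2
      nlinarith
    calc b / a ≤ ((1 + M) * s) / (r / 2) := by gcongr
      _ = _ := by field_simp
  have h3 : (b / a) ^ 3 ≤ (2 * (1 + M) / r) ^ 3 * s ^ 3 := by
    rw [← mul_pow]; gcongr
  have h4 : |r * (b / a) - s| ≤ (r * M + L) / (r / 2) * s ^ 3 := by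
    have e : r * (b / a) - s = (r * (b - s) - s * (a - r)) / a := by field_simp; ring
    rw [e, abs_div, abs_of_pos ha0, div_mul_eq_mul_div]
    have : |r * (b - s) - s * (a - r)| ≤ (r * M + L) * s ^ 3 := by
      refine (abs_sub _ _).trans ?_
      rw [abs_mul, abs_mul, abs_of_pos hr, abs_of_pos hs]
      nlinarith [mul_le_mul_of_nonneg_left hb hr.le, mul_le_mul_of_nonneg_left ha hs.le]
    gcongr
  have e : r * Real.arctan (b / a) - s = r * (Real.arctan (b/a) - b / a) + (r * (b/a) - s) := by
    ring
  rw [e]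
  refine (abs_add_le _ _).trans ?_
  rw [abs_mul, abs_of_pos hr]
  nlinarith [mul_le_mul_of_nonneg_left (h1.trans h3) hr.le]

/-- Theorem 4 of the paper: for a smooth unit-speed curve `γ` through `x = γ(0)`
with `γ'(0)` in a subspace `V` (the tangent space) and `γ''(0)` in `Vᗮ` (the normal
space), and a sphere of radius `r` centered at `c = x + r n` with `n ∈ Vᗮ` a unit
vector, the spherical distance estimate has third-order error. -/
theorem stmt_6 {D : ℕ} (γ : ℝ → EuclideanSpace ℝ (Fin D))
    (hγ : ContDiff ℝ (⊤ : ℕ∞) γ)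
    (hunit : ∀ t : ℝ, ‖deriv γ t‖ = 1)
    (x : EuclideanSpace ℝ (Fin D)) (hx : x = γ 0)
    (V : Submodule ℝ (EuclideanSpace ℝ (Fin D)))
    (htan : deriv γ 0 ∈ V) (hnor : deriv (deriv γ) 0 ∈ Vᗮ)
    (n : EuclideanSpace ℝ (Fin D)) (hnV : n ∈ Vᗮ) (hn : ‖n‖ = 1)
    (r : ℝ) (hr : 0 < r)
    (c : EuclideanSpace ℝ (Fin D)) (hc : c = x + r • n) :
    ∃ C > (0 : ℝ), ∃ ε > (0 : ℝ), ∀ s ∈ Set.Ioo (0 : ℝ) ε,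
      |r * Real.arccos (⟪x - c, γ s - c⟫ / (r * ‖γ s - c‖)) - s| ≤ C * s ^ 3 := by
  obtain ⟨K, hK, hT⟩ := aux_taylor γ hγ
  have hT1 := hunit 0
  generalize deriv (deriv γ) 0 = N at *
  generalize deriv γ 0 = T at *
  have hTn : ⟪n, T⟫ = 0 := Submodule.inner_left_of_mem_orthogonal htan hnV
  have hTN : ⟪T, N⟫ = 0 := Submodule.inner_right_of_mem_orthogonal htan hnor
  obtain ⟨q, hq⟩ : ∃ q, q = N - ⟪n, N⟫ • n := ⟨_, rfl⟩
  have hTq : ⟪T, q⟫ = 0 := by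
    rw [hq, inner_sub_right, hTN, inner_smul_right, real_inner_comm n T, hTn]; simp
  obtain ⟨L, hL⟩ : ∃ L, L = ‖N‖ + K := ⟨_, rfl⟩
  obtain ⟨M, hM⟩ : ∃ M, M = ‖q‖ ^ 2 + 2 * K := ⟨_, rfl⟩
  have hL0 : 0 ≤ L := by rw [hL]; positivity
  have hM0 : 0 ≤ M := by rw [hM]; positivity
  refine ⟨r * (2 * (1 + M) / r) ^ 3 + (r * M + L) / (r / 2), by positivity,
    min 1 (r / (2 * (L + 1))), by positivity, ?_⟩
  rintro s ⟨hs, hse⟩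
  have hs1 : s ≤ 1 := (hse.trans_le (min_le_left _ _)).le
  have hs2 : s ≤ r / (2 * (L + 1)) := (hse.trans_le (min_le_right _ _)).le
  have hR := hT s ⟨hs.le, hs1⟩
  rw [← hx] at hR
  obtain ⟨R, hRdef⟩ : ∃ R, R = γ s - (x + s • T + (s ^ 2 / 2) • N) := ⟨_, rfl⟩
  rw [← hRdef] at hR
  have hw : γ s - c = -(r • n) + s • T + (s ^ 2 / 2) • N + R := by
    rw [hRdef, hc]; abel
  have hxc : x - c = -(r • n) := by rw [hc]; abel
  have hnn : ⟪n, n⟫ = 1 := by rw [real_inner_self_eq_norm_sq, hn]; norm_num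
  have hinn : ⟪n, γ s - c⟫ = -r + s ^ 2 / 2 * ⟪n, N⟫ + ⟪n, R⟫ := by
    rw [hw]
    simp only [inner_add_right, inner_neg_right, inner_smul_right, hnn, hTn]; ring
  obtain ⟨a, ha⟩ : ∃ a, a = -⟪n, γ s - c⟫ := ⟨_, rfl⟩
  have hnN : |⟪n, N⟫| ≤ ‖N‖ := by simpa [hn] using abs_real_inner_le_norm n N
  have hnR : |⟪n, R⟫| ≤ ‖R‖ := by simpa [hn] using abs_real_inner_le_norm n R
  have hs3 : s ^ 3 ≤ s ^ 2 := pow_le_pow_of_le_one hs.le hs1 (by norm_num)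
  have ha1 : |a - r| ≤ L * s ^ 2 := by
    have e : a - r = -(s ^ 2 / 2 * ⟪n, N⟫ + ⟪n, R⟫) := by rw [ha, hinn]; ring
    rw [e, abs_neg]
    refine (abs_add_le _ _).trans ?_
    rw [abs_mul, abs_of_nonneg (by positivity : 0 ≤ s ^ 2 / 2), hL]
    have hp : 0 ≤ s ^ 2 := by positivity
    nlinarith [mul_le_mul_of_nonneg_left hnN hp, mul_le_mul_of_nonneg_left hs3 hK,
      mul_nonneg hp (norm_nonneg N)]
  have ha2 : r / 2 ≤ a := by
    have h1 : L * s ^ 2 ≤ r / 2 := by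
      rw [le_div_iff₀ (by positivity)] at hs2
      have : L * s ^ 2 ≤ L * s := by
        apply mul_le_mul_of_nonneg_left _ hL0; nlinarith
      nlinarith
    have := (abs_le.1 ha1).1
    linarith
  rw [hxc, aux_angle n (γ s - c) hn r a hr ha (by linarith)]
  refine aux_real r L M hr hL0 hM0 a _ s hs hs1 ha1 ha2 (norm_nonneg _) ?_
  obtain ⟨u, hu⟩ : ∃ u, u = s • T + (s ^ 2 / 2) • q := ⟨_, rfl⟩
  have hp : γ s - c + a • n = u + (R - ⟪n, R⟫ • n) := by
    rw [ha, hinn, hw, hu, hq]; module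
  have hR2 : ‖R - ⟪n, R⟫ • n‖ ≤ 2 * K * s ^ 3 := by
    refine (norm_sub_le _ _).trans ?_
    rw [norm_smul, hn, Real.norm_eq_abs]; linarith
  have hu2 : ‖u‖ ^ 2 = s ^ 2 + s ^ 4 / 4 * ‖q‖ ^ 2 := by
    rw [hu, norm_add_sq_real, inner_smul_left, inner_smul_right, hTq, norm_smul, norm_smul, hT1]
    simp only [Real.norm_eq_abs, mul_pow, sq_abs, mul_zero, add_zero, one_pow, mul_one]; ring
  have hu0 := norm_nonneg u
  have hul : s ≤ ‖u‖ := by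
    refine (sq_le_sq₀ (by positivity) hu0).1 ?_
    rw [hu2]; have : 0 ≤ s ^ 4 / 4 * ‖q‖ ^ 2 := by positivity
    linarith
  have huu : ‖u‖ ≤ s + ‖q‖ ^ 2 * s ^ 3 := by
    refine (sq_le_sq₀ (by positivity) (by positivity)).1 ?_
    rw [hu2]
    have h1 : 0 ≤ s ^ 4 * ‖q‖ ^ 2 := by positivity
    have h2 : 0 ≤ (‖q‖ ^ 2 * s ^ 3) ^ 2 := by positivity
    have e : (s + ‖q‖ ^ 2 * s ^ 3) ^ 2 =
        s ^ 2 + 2 * (s ^ 4 * ‖q‖ ^ 2) + (‖q‖ ^ 2 * s ^ 3) ^ 2 := by ring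
    rw [e]
    linarith
  rw [hp]
  have h1 := norm_add_le u (R - ⟪n, R⟫ • n)
  have h2 := norm_sub_le (u + (R - ⟪n, R⟫ • n)) (R - ⟪n, R⟫ • n)
  rw [add_sub_cancel_right] at h2
  have h3 : 0 ≤ ‖q‖ ^ 2 * s ^ 3 := by positivity
  rw [hM, abs_le]; constructor <;> linarith
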